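/- Let b be a connected, canonically compactifiable graph over a finite discrete measure space (X,m), let c > 0, and let h ∈ ℓ²(X,m) with h(x₀) > 0 for some x₀ ∈ X. Then the set B := {v ∈ D(Q) : ⟨h e^v, 1⟩ = c·m(X)} is nonempty and the functional J(v) := (1/2)Q(v) + c·m(X)·v̄ attains its infimum on B: there exists u ∈ B with J(u) ≤ J(v) for all v ∈ B. -/

import Mathlib

open scoped BigOperators

/-- `u` is square-summable with respect to the measure `m`, i.e. `u ∈ ℓ²(X,m)`. -/
def MemL2 {X : Type*} (m : X → ℝ) (u : X → ℝ) : Prop :=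
  Summable (fun x => u x ^ 2 * m x)

/-- `u` has finite energy: the sum defining `Q̃(u)` converges. -/
def FinEnergy {X : Type*} (b : X → X → ℝ) (u : X → ℝ) : Prop :=
  Summable (fun p : X × X => b p.1 p.2 * (u p.1 - u p.2) ^ 2)

/-- The energy `Q(u) = (1/2) Σ_{x,y} b(x,y) (u(x) - u(y))²`. -/
noncomputable def energy {X : Type*} (b : X → X → ℝ) (u : X → ℝ) : ℝ :=
  (1 / 2) * ∑' p : X × X, b p.1 p.2 * (u p.1 - u p.2) ^ 2

/-- The bilinear energy form `Q(u,v) = (1/2) Σ_{x,y} b(x,y)(u(x)-u(y))(v(x)-v(y))`. -/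
noncomputable def energyBil {X : Type*} (b : X → X → ℝ) (u v : X → ℝ) : ℝ :=
  (1 / 2) * ∑' p : X × X, b p.1 p.2 * (u p.1 - u p.2) * (v p.1 - v p.2)

/-- The form domain `D(Q) = ℓ²(X,m) ∩ D̃`. -/
def MemDQ {X : Type*} (b : X → X → ℝ) (m : X → ℝ) (u : X → ℝ) : Prop :=
  MemL2 m u ∧ FinEnergy b u

/-- The form norm `‖u‖_Q = (Q(u) + ‖u‖₂²)^{1/2}`. -/
noncomputable def formNorm {X : Type*} (b : X → X → ℝ) (m : X → ℝ) (u : X → ℝ) : ℝ :=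
  Real.sqrt (energy b u + ∑' x, u x ^ 2 * m x)

/-- `b` is a graph over `X`: symmetric, nonnegative, zero on the diagonal,
with summable rows. -/
structure IsGraph {X : Type*} (b : X → X → ℝ) : Prop where
  symm : ∀ x y, b x y = b y x
  nonneg : ∀ x y, 0 ≤ b x y
  diag : ∀ x, b x x = 0
  row_summable : ∀ x, Summable (fun y => b x y)

/-- The graph `b` is connected: any two points are joined by a path of edges of
positive weight. -/
def GraphConnected {X : Type*} (b : X → X → ℝ) : Prop :=
  ∀ x y : X, Relation.ReflTransGen (fun a c => 0 < b a c) x y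

/-- `(X,m)` is a finite discrete measure space: `m > 0` everywhere and `m(X) < ∞`. -/
structure FinMeasure {X : Type*} (m : X → ℝ) : Prop where
  pos : ∀ x, 0 < m x
  summable : Summable m

/-- The graph `b` over `(X,m)` is canonically compactifiable: every function in
`D(Q)` is bounded. -/
def CanCompact {X : Type*} (b : X → X → ℝ) (m : X → ℝ) : Prop :=
  ∀ u : X → ℝ, MemDQ b m u → ∃ M : ℝ, ∀ x, |u x| ≤ M

/-- `u ∈ D(L)` with `L u = f` for the Neumann Laplacian `L`:
`u ∈ D(Q)`, `f ∈ ℓ²(X,m)` and `Q(u,v) = ⟨f,v⟩` for all `v ∈ D(Q)`. -/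
def IsLap {X : Type*} (b : X → X → ℝ) (m : X → ℝ) (u f : X → ℝ) : Prop :=
  MemDQ b m u ∧ MemL2 m f ∧
    ∀ v : X → ℝ, MemDQ b m v → energyBil b u v = ∑' x, f x * v x * m x

/-- The mean `ū = ⟨u,1⟩ / m(X)`. -/
noncomputable def mean {X : Type*} (m : X → ℝ) (u : X → ℝ) : ℝ :=
  (∑' x, u x * m x) / (∑' x, m x)


/-!
Bounded functions on `X` with a common bound form a compact set for pointwise convergence, on which
`v ↦ ⟨h e^v, 1⟩` and `v ↦ v̄` are continuous by dominated convergence and the energy is lower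
semicontinuous by Fatou's lemma. So everything rests on coercivity, that is, on the estimate
`‖u - ū‖_∞² ≤ C Q(u)`: on `B` the constraint then bounds `v̄` below by a constant minus
`(C Q(v))^{1/2}`, so a bound on `J` bounds `Q(v)`, `v̄` and `‖v‖_∞`.

The embedding `D(Q) ⊆ ℓ^∞` is automatically bounded, since otherwise `(Σ wₙ²)^{1/2}` would be
an unbounded element of `D(Q)` for suitable `wₙ` with `Σ ‖wₙ‖_Q² < ∞`. In the resulting estimate for
`u - u(x₀)` the `ℓ²` part is absorbed: its sum over a large finite set is controlled by
`Q(u)` along paths, and the remaining set has so little mass that it contributes at most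
`‖u - u(x₀)‖_∞² / 2`.
-/

section FormDomain

variable {X : Type*} {b : X → X → ℝ} {m : X → ℝ}

lemma energy_nonneg (hb : ∀ x y, 0 ≤ b x y) (u : X → ℝ) : 0 ≤ energy b u :=
  mul_nonneg (by norm_num) (tsum_nonneg fun p => mul_nonneg (hb p.1 p.2) (sq_nonneg _))

lemma FinEnergy.sum_le_two_mul_energy (hb : ∀ x y, 0 ≤ b x y) {u : X → ℝ} (hu : FinEnergy b u)
    (s : Finset (X × X)) : ∑ p ∈ s, b p.1 p.2 * (u p.1 - u p.2) ^ 2 ≤ 2 * energy b u := by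
  have hsum := hu.sum_le_tsum s fun p _ => mul_nonneg (hb p.1 p.2) (sq_nonneg _)
  unfold energy
  linarith

lemma energy_add_const (u : X → ℝ) (a : ℝ) : energy b (fun x => u x + a) = energy b u := by
  simp only [energy, add_sub_add_right_eq_sub]

lemma energy_const_mul (r : ℝ) (u : X → ℝ) :
    energy b (fun x => r * u x) = r ^ 2 * energy b u := by
  simp only [energy, ← mul_sub, mul_pow, mul_left_comm _ (r ^ 2), tsum_mul_left]

lemma formNorm_sq (hb : ∀ x y, 0 ≤ b x y) (hm : ∀ x, 0 ≤ m x) (u : X → ℝ) :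
    formNorm b m u ^ 2 = energy b u + ∑' x, u x ^ 2 * m x :=
  Real.sq_sqrt <| add_nonneg (energy_nonneg hb u) <|
    tsum_nonneg fun x => mul_nonneg (sq_nonneg _) (hm x)

lemma formNorm_const_mul_sq (hb : ∀ x y, 0 ≤ b x y) (hm : ∀ x, 0 ≤ m x) (r : ℝ) (u : X → ℝ) :
    formNorm b m (fun x => r * u x) ^ 2 = r ^ 2 * formNorm b m u ^ 2 := by
  simp only [formNorm_sq hb hm, energy_const_mul, mul_pow, mul_assoc, tsum_mul_left, mul_add]

lemma MemL2.of_abs_le (hm : FinMeasure m) {u : X → ℝ} {R : ℝ} (hu : ∀ x, |u x| ≤ R) :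
    MemL2 m u := by
  refine .of_nonneg_of_le (fun x => mul_nonneg (sq_nonneg _) (hm.pos x).le) (fun x => ?_)
    (hm.summable.mul_left (R ^ 2))
  exact mul_le_mul_of_nonneg_right (sq_le_sq' (neg_le_of_abs_le (hu x)) (le_of_abs_le (hu x)))
    (hm.pos x).le

lemma MemL2.summable_mul (hm : FinMeasure m) {u : X → ℝ} (hu : MemL2 m u) :
    Summable fun x => u x * m x := by
  refine .of_norm_bounded (hu.add hm.summable) fun x => ?_
  rw [norm_mul, Real.norm_eq_abs, Real.norm_of_nonneg (hm.pos x).le, ← add_one_mul]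
  refine mul_le_mul_of_nonneg_right ?_ (hm.pos x).le
  nlinarith [sq_abs (u x), sq_nonneg (|u x| - 1)]

lemma MemDQ.const_mul {u : X → ℝ} (hu : MemDQ b m u) (r : ℝ) : MemDQ b m fun x => r * u x := by
  constructor
  · simpa only [MemL2, mul_pow, mul_assoc] using hu.1.mul_left (r ^ 2)
  · simpa only [FinEnergy, ← mul_sub, mul_pow, mul_left_comm] using hu.2.mul_left (r ^ 2)

lemma MemDQ.add_const (hm : FinMeasure m) {u : X → ℝ} (hu : MemDQ b m u) (a : ℝ) :
    MemDQ b m fun x => u x + a := by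
  constructor
  · refine .of_nonneg_of_le (fun x => mul_nonneg (sq_nonneg _) (hm.pos x).le) (fun x => ?_)
      ((hu.1.mul_left 2).add (hm.summable.mul_left (2 * a ^ 2)))
    rw [← mul_assoc, ← add_mul]
    exact mul_le_mul_of_nonneg_right (by nlinarith [sq_nonneg (u x - a)]) (hm.pos x).le
  · simpa only [FinEnergy, add_sub_add_right_eq_sub] using hu.2

lemma IsGraph.memDQ_single [DecidableEq X] (hb : IsGraph b) (m : X → ℝ) (x₀ : X) (r : ℝ) :
    MemDQ b m (Pi.single x₀ r) := by
  constructor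
  · exact summable_of_ne_finset_zero (s := {x₀}) fun x hx => by
      simp [Pi.single_eq_of_ne (Finset.notMem_singleton.1 hx)]
  have edges_from : Summable fun p : X × X => b p.1 p.2 * (Pi.single x₀ (r ^ 2) : X → ℝ) p.1 := by
    have hinj : Function.Injective (Prod.mk x₀ : X → X × X) := Prod.mk_right_injective x₀
    refine (hinj.summable_iff fun p hp => ?_).1 ?_
    · have : p.1 ≠ x₀ := fun h => hp ⟨p.2, Prod.ext h.symm rfl⟩
      simp [Pi.single_eq_of_ne this]
    · simpa [Function.comp_def] using (hb.row_summable x₀).mul_right (r ^ 2)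
  have edges_to : Summable fun p : X × X => b p.1 p.2 * (Pi.single x₀ (r ^ 2) : X → ℝ) p.2 :=
    edges_from.prod_symm.congr fun p => by simp [hb.symm p.1 p.2]
  refine .of_nonneg_of_le (fun p => mul_nonneg (hb.nonneg _ _) (sq_nonneg _)) (fun p => ?_)
    (edges_from.add edges_to)
  rw [← mul_add]
  refine mul_le_mul_of_nonneg_left ?_ (hb.nonneg _ _)
  by_cases h₁ : p.1 = x₀ <;> by_cases h₂ : p.2 = x₀ <;> simp [h₁, h₂, sq_nonneg]

end FormDomain

section SupNormEstimates

lemma sq_sqrt_tsum_sq_sub_le {ι : Type*} {f g : ι → ℝ} (hf : Summable fun i => f i ^ 2)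
    (hg : Summable fun i => g i ^ 2) :
    (√(∑' i, f i ^ 2) - √(∑' i, g i ^ 2)) ^ 2 ≤ ∑' i, (f i - g i) ^ 2 := by
  have norm_sq (F : lp (fun _ : ι => ℝ) 2) : ‖F‖ ^ 2 = ∑' i, F i ^ 2 := by
    simpa using lp.norm_rpow_eq_tsum (p := 2) (by norm_num) F
  have memℓp {f : ι → ℝ} (hf : Summable fun i => f i ^ 2) : Memℓp f 2 :=
    memℓp_gen (by simpa using hf)
  let F : lp (fun _ : ι => ℝ) 2 := ⟨f, memℓp hf⟩
  let G : lp (fun _ : ι => ℝ) 2 := ⟨g, memℓp hg⟩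
  calc (√(∑' i, f i ^ 2) - √(∑' i, g i ^ 2)) ^ 2 = |‖F‖ - ‖G‖| ^ 2 := by
        rw [sq_abs, ← Real.sqrt_sq (norm_nonneg F), ← Real.sqrt_sq (norm_nonneg G), norm_sq,
          norm_sq]
    _ ≤ ‖F - G‖ ^ 2 := pow_le_pow_left₀ (abs_nonneg _) (abs_norm_sub_norm_le F G) 2
    _ = ∑' i, (f i - g i) ^ 2 := norm_sq (F - G)

variable {X : Type*} {b : X → X → ℝ} {m : X → ℝ}

lemma summable_sq_of_summable_formNorm_sq {ι : Type*} (hb : ∀ x y, 0 ≤ b x y) (hm : ∀ x, 0 < m x)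
    {w : ι → X → ℝ} (hw : ∀ i, MemL2 m (w i)) (hs : Summable fun i => formNorm b m (w i) ^ 2)
    (x : X) : Summable fun i => w i x ^ 2 := by
  refine .of_nonneg_of_le (fun i => sq_nonneg _) (fun i => ?_) (hs.div_const (m x))
  have hterm : w i x ^ 2 * m x ≤ ∑' y, w i y ^ 2 * m y :=
    (hw i).le_tsum x fun y _ => mul_nonneg (sq_nonneg _) (hm y).le
  rw [le_div_iff₀ (hm x), formNorm_sq hb fun y => (hm y).le]
  linarith [energy_nonneg hb (w i)]

lemma memDQ_sqrt_tsum_sq {ι : Type*} (hb : ∀ x y, 0 ≤ b x y) (hm : ∀ x, 0 < m x)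
    {w : ι → X → ℝ} (hw : ∀ i, MemDQ b m (w i))
    (hs : Summable fun i => formNorm b m (w i) ^ 2) :
    MemDQ b m fun x => √(∑' i, w i x ^ 2) := by
  have hl2 (u : X → ℝ) : 0 ≤ ∑' x, u x ^ 2 * m x :=
    tsum_nonneg fun x => mul_nonneg (sq_nonneg _) (hm x).le
  have hF (i : ι) := formNorm_sq hb (fun x => (hm x).le) (w i)
  have hsq := summable_sq_of_summable_formNorm_sq hb hm (fun i => (hw i).1) hs
  have hl2_double : Summable fun q : ι × X => w q.1 q.2 ^ 2 * m q.2 :=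
    (summable_prod_of_nonneg fun q => mul_nonneg (sq_nonneg _) (hm q.2).le).2
      ⟨fun i => (hw i).1, hs.of_nonneg_of_le (fun i => hl2 (w i)) fun i => by
        linarith [hF i, energy_nonneg hb (w i)]⟩
  have henergy_double : Summable fun q : ι × X × X =>
      b q.2.1 q.2.2 * (w q.1 q.2.1 - w q.1 q.2.2) ^ 2 := by
    refine (summable_prod_of_nonneg fun q => mul_nonneg (hb _ _) (sq_nonneg _)).2
      ⟨fun i => (hw i).2, (hs.mul_left 2).of_nonneg_of_le
        (fun i => tsum_nonneg fun p => mul_nonneg (hb _ _) (sq_nonneg _)) fun i => ?_⟩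
    have hE : ∑' p : X × X, b p.1 p.2 * (w i p.1 - w i p.2) ^ 2 = 2 * energy b (w i) := by
      unfold energy
      ring
    linarith [hF i, hl2 (w i)]
  constructor
  · refine hl2_double.prod_symm.prod.congr fun x => ?_
    rw [Real.sq_sqrt (tsum_nonneg fun i => sq_nonneg _), ← tsum_mul_right]
    rfl
  · refine henergy_double.prod_symm.prod.of_nonneg_of_le
      (fun p => mul_nonneg (hb _ _) (sq_nonneg _)) fun p => ?_
    calc b p.1 p.2 * (√(∑' i, w i p.1 ^ 2) - √(∑' i, w i p.2 ^ 2)) ^ 2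
        ≤ b p.1 p.2 * ∑' i, (w i p.1 - w i p.2) ^ 2 :=
          mul_le_mul_of_nonneg_left (sq_sqrt_tsum_sq_sub_le (hsq p.1) (hsq p.2)) (hb _ _)
      _ = ∑' i, b p.1 p.2 * (w i p.1 - w i p.2) ^ 2 := tsum_mul_left.symm

lemma CanCompact.exists_sq_le_formNorm_sq (hcc : CanCompact b m) (hb : ∀ x y, 0 ≤ b x y)
    (hm : ∀ x, 0 < m x) :
    ∃ C : ℝ, 0 < C ∧ ∀ u, MemDQ b m u → ∀ x, u x ^ 2 ≤ C * formNorm b m u ^ 2 := by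
  by_contra! hunbounded
  choose u hu x hx using fun n : ℕ => hunbounded (8 ^ n) (by positivity)
  have hux (n : ℕ) : 0 < u n (x n) ^ 2 := lt_of_le_of_lt (by positivity) (hx n)
  let w (n : ℕ) (y : X) : ℝ := 2 ^ n / u n (x n) * u n y
  have hwx (n : ℕ) : w n (x n) = 2 ^ n := div_mul_cancel₀ _ (sq_pos_iff.1 (hux n))
  have hw (n : ℕ) : MemDQ b m (w n) := (hu n).const_mul _
  have hw_small (n : ℕ) : formNorm b m (w n) ^ 2 ≤ (1 / 2) ^ n := by
    have h8 : (8 : ℝ) ^ n = (2 ^ n) ^ 3 := by rw [pow_right_comm]; norm_num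
    calc formNorm b m (w n) ^ 2 = (2 ^ n) ^ 2 * formNorm b m (u n) ^ 2 / u n (x n) ^ 2 := by
          rw [formNorm_const_mul_sq hb fun y => (hm y).le, div_pow, div_mul_eq_mul_div]
      _ ≤ (1 / 2) ^ n := by
          rw [div_le_iff₀ (hux n), one_div_pow, one_div, le_inv_mul_iff₀ (by positivity)]
          refine le_trans (le_of_eq ?_) (hx n).le
          rw [h8]
          ring
  have hs : Summable fun n => formNorm b m (w n) ^ 2 :=
    summable_geometric_two.of_nonneg_of_le (fun n => sq_nonneg _) hw_small
  obtain ⟨M, hM⟩ := hcc _ (memDQ_sqrt_tsum_sq hb hm hw hs)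
  obtain ⟨n, hn⟩ := pow_unbounded_of_one_lt M (one_lt_two (α := ℝ))
  refine hn.not_ge ?_
  calc (2 : ℝ) ^ n = w n (x n) := (hwx n).symm
    _ ≤ √(∑' k, w k (x n) ^ 2) := Real.le_sqrt_of_sq_le <|
        (summable_sq_of_summable_formNorm_sq hb hm (fun k => (hw k).1) hs (x n)).le_tsum n
          fun k _ => sq_nonneg _
    _ ≤ M := le_of_abs_le (hM (x n))

lemma exists_sq_sub_le_energy_of_reflTransGen (hb : ∀ x y, 0 ≤ b x y) {x y : X}
    (hxy : Relation.ReflTransGen (fun a c => 0 < b a c) x y) :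
    ∃ C : ℝ, ∀ u, FinEnergy b u → (u y - u x) ^ 2 ≤ C * energy b u := by
  induction hxy with
  | refl => exact ⟨0, fun u _ => by simp⟩
  | @tail y z _ hyz ih =>
    obtain ⟨C, hC⟩ := ih
    refine ⟨2 * (C + 2 / b y z), fun u hu => ?_⟩
    have hedge : (u z - u y) ^ 2 ≤ 2 / b y z * energy b u := by
      have hterm := hu.sum_le_two_mul_energy hb {(y, z)}
      rw [Finset.sum_singleton] at hterm
      rw [div_mul_eq_mul_div, le_div_iff₀ hyz]
      linarith [sub_sq_comm (u z) (u y)]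
    calc (u z - u x) ^ 2 = ((u y - u x) + (u z - u y)) ^ 2 := by ring
      _ ≤ 2 * ((u y - u x) ^ 2 + (u z - u y) ^ 2) := add_sq_le
      _ ≤ 2 * (C * energy b u + 2 / b y z * energy b u) := by gcongr; exact hC u hu
      _ = 2 * (C + 2 / b y z) * energy b u := by ring

lemma tsum_mul_le_sum_add_mul_tsum_sub (hm : ∀ x, 0 ≤ m x) (hm_sum : Summable m) {f : X → ℝ}
    (hfm : Summable fun x => f x * m x) {S : ℝ} (hf : ∀ x, f x ≤ S) (F : Finset X) :
    ∑' x, f x * m x ≤ ∑ x ∈ F, f x * m x + S * (∑' x, m x - ∑ x ∈ F, m x) := by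
  have hcompl := ((hm_sum.mul_left S).sub hfm).sum_le_tsum F fun x _ =>
    sub_nonneg.2 (mul_le_mul_of_nonneg_right (hf x) (hm x))
  rw [(hm_sum.mul_left S).tsum_sub hfm, Finset.sum_sub_distrib, tsum_mul_left,
    ← Finset.mul_sum] at hcompl
  linarith

lemma exists_formNorm_sq_le_energy_add (hb : ∀ x y, 0 ≤ b x y) (hconn : GraphConnected b)
    (hm : FinMeasure m) (x₀ : X) {ε : ℝ} (hε : 0 < ε) :
    ∃ D : ℝ, ∀ u, MemDQ b m u → u x₀ = 0 → ∀ S, (∀ x, u x ^ 2 ≤ S) →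
      formNorm b m u ^ 2 ≤ D * energy b u + ε * S := by
  choose D hD using fun y => exists_sq_sub_le_energy_of_reflTransGen hb (hconn x₀ y)
  obtain ⟨F, hF⟩ : ∃ F : Finset X, ∑' x, m x - ∑ x ∈ F, m x < ε := by
    have htail := hm.summable.hasSum.const_sub (∑' x, m x)
    rw [sub_self] at htail
    exact (htail.eventually_lt_const hε).exists
  refine ⟨1 + ∑ y ∈ F, D y * m y, fun u hu hu₀ S hS => ?_⟩
  have hS₀ : 0 ≤ S := (sq_nonneg _).trans (hS x₀)
  have hpaths : ∑ y ∈ F, u y ^ 2 * m y ≤ (∑ y ∈ F, D y * m y) * energy b u := by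
    rw [Finset.sum_mul]
    refine Finset.sum_le_sum fun y _ => ?_
    have hDy := hD y u hu.2
    rw [hu₀, sub_zero] at hDy
    rw [mul_right_comm]
    exact mul_le_mul_of_nonneg_right hDy (hm.pos y).le
  calc formNorm b m u ^ 2 = energy b u + ∑' y, u y ^ 2 * m y :=
        formNorm_sq hb (fun y => (hm.pos y).le) u
    _ ≤ energy b u + (∑ y ∈ F, u y ^ 2 * m y + S * (∑' y, m y - ∑ y ∈ F, m y)) := by
        gcongr
        exact tsum_mul_le_sum_add_mul_tsum_sub (fun y => (hm.pos y).le) hm.summable hu.1 hS F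
    _ ≤ (1 + ∑ y ∈ F, D y * m y) * energy b u + ε * S := by
        linarith [mul_le_mul_of_nonneg_left hF.le hS₀]

lemma CanCompact.exists_sq_sub_le_energy (hcc : CanCompact b m) (hb : ∀ x y, 0 ≤ b x y)
    (hconn : GraphConnected b) (hm : FinMeasure m) (x₀ : X) :
    ∃ C : ℝ, ∀ u, MemDQ b m u → ∀ x, (u x - u x₀) ^ 2 ≤ C * energy b u := by
  obtain ⟨C, hC₀, hC⟩ := hcc.exists_sq_le_formNorm_sq hb hm.pos
  obtain ⟨D, hD⟩ := exists_formNorm_sq_le_energy_add hb hconn hm x₀ (ε := 1 / (2 * C))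
    (by positivity)
  refine ⟨2 * C * D, fun u hu x => ?_⟩
  let w (y : X) : ℝ := u y + -u x₀
  have hw : MemDQ b m w := hu.add_const hm _
  have hbdd : BddAbove (Set.range fun y => w y ^ 2) := by
    obtain ⟨M, hM⟩ := hcc w hw
    refine ⟨M ^ 2, Set.forall_mem_range.2 fun y => ?_⟩
    exact sq_le_sq' (neg_le_of_abs_le (hM y)) (le_of_abs_le (hM y))
  set S := ⨆ y, w y ^ 2
  have habsorb (y : X) : w y ^ 2 ≤ C * D * energy b u + S / 2 :=
    calc w y ^ 2 ≤ C * formNorm b m w ^ 2 := hC w hw y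
      _ ≤ C * (D * energy b w + 1 / (2 * C) * S) := by
          gcongr
          exact hD w hw (add_neg_cancel _) S (le_ciSup hbdd)
      _ = C * D * energy b u + S / 2 := by
          rw [energy_add_const]
          field_simp
  have : Nonempty X := ⟨x⟩
  have hS : S ≤ C * D * energy b u + S / 2 := ciSup_le habsorb
  calc (u x - u x₀) ^ 2 = w x ^ 2 := by ring
    _ ≤ S := le_ciSup hbdd x
    _ ≤ 2 * C * D * energy b u := by linarith

lemma FinMeasure.tsum_pos [Nonempty X] (hm : FinMeasure m) : 0 < ∑' x, m x :=
  hm.summable.tsum_pos (fun x => (hm.pos x).le) (Classical.arbitrary X) (hm.pos _)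

lemma abs_mean_sub_le [Nonempty X] (hm : FinMeasure m) {u : X → ℝ} {a r : ℝ}
    (hu : ∀ x, |u x - a| ≤ r) : |mean m u - a| ≤ r := by
  have hbound (x : X) : ‖(u x - a) * m x‖ ≤ r * m x := by
    rw [norm_mul, Real.norm_eq_abs, Real.norm_of_nonneg (hm.pos x).le]
    exact mul_le_mul_of_nonneg_right (hu x) (hm.pos x).le
  have hr := hm.summable.hasSum.mul_left r
  have hsum : Summable fun x => (u x - a) * m x := .of_norm_bounded hr.summable hbound
  have hum : ∑' x, u x * m x = ∑' x, (u x - a) * m x + a * ∑' x, m x := by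
    rw [← tsum_mul_left, ← hsum.tsum_add (hm.summable.mul_left a)]
    exact tsum_congr fun x => by ring
  have hmean : mean m u - a = (∑' x, (u x - a) * m x) / ∑' x, m x := by
    rw [mean, hum, add_div, mul_div_cancel_right₀ _ hm.tsum_pos.ne', add_sub_cancel_right]
  rw [hmean, abs_div, abs_of_pos hm.tsum_pos, div_le_iff₀ hm.tsum_pos]
  exact tsum_of_norm_bounded hr hbound

lemma CanCompact.exists_abs_sub_mean_le [Nonempty X] (hcc : CanCompact b m)
    (hb : ∀ x y, 0 ≤ b x y) (hconn : GraphConnected b) (hm : FinMeasure m) :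
    ∃ C : ℝ, 0 ≤ C ∧ ∀ u, MemDQ b m u → ∀ x, |u x - mean m u| ≤ C * √(energy b u) := by
  let x₀ := Classical.arbitrary X
  obtain ⟨C, hC⟩ := hcc.exists_sq_sub_le_energy hb hconn hm x₀
  refine ⟨2 * √C, by positivity, fun u hu x => ?_⟩
  have hosc (y : X) : |u y - u x₀| ≤ √C * √(energy b u) := by
    rw [← Real.sqrt_mul' C (energy_nonneg hb u)]
    exact Real.abs_le_sqrt (hC u hu y)
  calc |u x - mean m u| ≤ |u x - u x₀| + |mean m u - u x₀| := by
        rw [abs_sub_comm (mean m u)]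
        exact abs_sub_le _ _ _
    _ ≤ 2 * √C * √(energy b u) := by linarith [hosc x, abs_mean_sub_le hm hosc]

end SupNormEstimates

section PointwiseTopology

variable {X : Type*} {b : X → X → ℝ} {m : X → ℝ}

lemma isCompact_setOf_forall_abs_le (R : ℝ) : IsCompact {v : X → ℝ | ∀ x, |v x| ≤ R} := by
  simpa only [Set.pi, Set.mem_univ, true_imp_iff, Set.mem_Icc, abs_le] using
    isCompact_univ_pi fun _ : X => isCompact_Icc (a := -R) (b := R)

lemma continuousOn_tsum_mul_comp {φ : ℝ → ℝ} (hφ : Continuous φ) {g : X → ℝ} (hg : Summable g)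
    (R : ℝ) : ContinuousOn (fun v : X → ℝ => ∑' x, g x * φ (v x)) {v | ∀ x, |v x| ≤ R} := by
  obtain ⟨K, hK⟩ := (isCompact_Icc (a := -R) (b := R)).exists_bound_of_continuousOn hφ.continuousOn
  refine continuousOn_tsum (fun x => by fun_prop) (hg.norm.mul_right K) fun x v hv => ?_
  rw [norm_mul]
  exact mul_le_mul_of_nonneg_left (hK _ (abs_le.1 (hv x))) (norm_nonneg _)

lemma continuousOn_mean (hm : Summable m) (R : ℝ) :
    ContinuousOn (mean m) {v | ∀ x, |v x| ≤ R} := by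
  refine ContinuousOn.div_const ?_ _
  simpa only [mul_comm, id_eq] using continuousOn_tsum_mul_comp continuous_id hm R

lemma isClosed_setOf_energy_le (hb : ∀ x y, 0 ≤ b x y) (E : ℝ) :
    IsClosed {u | FinEnergy b u ∧ energy b u ≤ E} := by
  have h_inter : {u | FinEnergy b u ∧ energy b u ≤ E} =
      ⋂ s : Finset (X × X), {u | ∑ p ∈ s, b p.1 p.2 * (u p.1 - u p.2) ^ 2 ≤ 2 * E} := by
    ext u
    simp only [Set.mem_ofPred_eq, Set.mem_iInter]
    refine ⟨fun hu s => ?_, fun hu => ?_⟩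
    · linarith [hu.1.sum_le_two_mul_energy hb s, hu.2]
    · have hfin : FinEnergy b u :=
        summable_of_sum_le (fun p => mul_nonneg (hb _ _) (sq_nonneg _)) hu
      refine ⟨hfin, ?_⟩
      unfold energy
      linarith [hfin.tsum_le_of_sum_le hu]
  rw [h_inter]
  exact isClosed_iInter fun s => isClosed_le (by fun_prop) continuous_const

lemma lowerSemicontinuousOn_energy (hb : ∀ x y, 0 ≤ b x y) :
    LowerSemicontinuousOn (energy b) {u | FinEnergy b u} := by
  intro u hu t ht
  have hpartial := hu.hasSum.const_mul (1 / 2)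
  obtain ⟨s, hs⟩ := (hpartial.eventually_const_lt ht).exists
  have hcont : Continuous fun v : X → ℝ =>
      1 / 2 * ∑ p ∈ s, b p.1 p.2 * (v p.1 - v p.2) ^ 2 := by fun_prop
  filter_upwards [self_mem_nhdsWithin,
    nhdsWithin_le_nhds (hcont.continuousAt.eventually_const_lt hs)] with v hv htv
  linarith [FinEnergy.sum_le_two_mul_energy hb hv s]

end PointwiseTopology

section KazdanWarner

/-- The constraint set `B` of the Kazdan–Warner minimization problem: the functions `v ∈ D(Q)`
with `⟨h e^v, 1⟩ = A`. -/
def kazdanWarnerSet {X : Type*} (b : X → X → ℝ) (m h : X → ℝ) (A : ℝ) : Set (X → ℝ) :=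
  {v | MemDQ b m v ∧ ∑' x, h x * Real.exp (v x) * m x = A}

/-- The functional `J(v) = (1/2) Q(v) + κ v̄` minimized over `kazdanWarnerSet`. The weight `κ` of
the mean is kept independent of the value `A` of the constraint. -/
noncomputable def kazdanWarnerFunctional {X : Type*} (b : X → X → ℝ) (m : X → ℝ) (κ : ℝ)
    (v : X → ℝ) : ℝ :=
  1 / 2 * energy b v + κ * mean m v

variable {X : Type*} {b : X → X → ℝ} {m h : X → ℝ} {A κ : ℝ}

lemma exists_memDQ_tsum_mul_exp_pos (hb : IsGraph b) (hm : ∀ x, 0 < m x)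
    (hh : Summable fun x => h x * m x) {x₀ : X} (hx₀ : 0 < h x₀) :
    ∃ w, MemDQ b m w ∧ 0 < ∑' x, h x * Real.exp (w x) * m x := by
  classical
  have hhm : 0 < h x₀ * m x₀ := mul_pos hx₀ (hm x₀)
  set I := ∑' x, h x * m x
  set T := 1 + (|I| + 1) / (h x₀ * m x₀) with hT
  have hexp (x : X) : h x * Real.exp ((Pi.single x₀ (Real.log T) : X → ℝ) x) * m x =
      h x * m x + (Pi.single x₀ (|I| + 1) : X → ℝ) x := by
    rcases eq_or_ne x x₀ with rfl | hx
    · rw [Pi.single_eq_same, Pi.single_eq_same, Real.exp_log (by positivity), hT]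
      field_simp [(hm x).ne']
    · simp [Pi.single_eq_of_ne hx]
  have hsum : HasSum (fun x => h x * Real.exp ((Pi.single x₀ (Real.log T) : X → ℝ) x) * m x)
      (I + (|I| + 1)) := by
    simpa only [hexp] using hh.hasSum.add (hasSum_pi_single x₀ (|I| + 1))
  refine ⟨Pi.single x₀ (Real.log T), hb.memDQ_single m x₀ _, ?_⟩
  rw [hsum.tsum_eq]
  linarith [neg_abs_le I]

lemma kazdanWarnerSet_nonempty (hb : IsGraph b) (hm : FinMeasure m)
    (hh : Summable fun x => h x * m x) (hpos : ∃ x₀, 0 < h x₀) (hA : 0 < A) :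
    (kazdanWarnerSet b m h A).Nonempty := by
  obtain ⟨x₀, hx₀⟩ := hpos
  obtain ⟨w, hw, hS⟩ := exists_memDQ_tsum_mul_exp_pos hb hm.pos hh hx₀
  set S := ∑' x, h x * Real.exp (w x) * m x with hS_def
  refine ⟨fun x => w x + Real.log (A / S), hw.add_const hm _, ?_⟩
  have hshift (x : X) : h x * Real.exp (w x + Real.log (A / S)) * m x =
      A / S * (h x * Real.exp (w x) * m x) := by
    rw [Real.exp_add, Real.exp_log (by positivity)]
    ring
  rw [tsum_congr hshift, tsum_mul_left, ← hS_def, div_mul_cancel₀ _ hS.ne']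

lemma tsum_mul_exp_le (hh : Summable fun x => h x * m x) {v : X → ℝ} {a : ℝ}
    (hv : ∀ x, v x ≤ a) :
    ∑' x, h x * Real.exp (v x) * m x ≤ Real.exp a * ∑' x, |h x * m x| := by
  refine (Real.le_norm_self _).trans
    (tsum_of_norm_bounded (hh.abs.hasSum.mul_left (Real.exp a)) fun x => ?_)
  rw [mul_right_comm, norm_mul, Real.norm_of_nonneg (Real.exp_pos _).le, mul_comm]
  exact mul_le_mul_of_nonneg_right (Real.exp_le_exp.2 (hv x)) (norm_nonneg _)

lemma log_div_le_of_mem_kazdanWarnerSet (hh : Summable fun x => h x * m x) (hA : 0 < A)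
    {v : X → ℝ} (hv : v ∈ kazdanWarnerSet b m h A) {a : ℝ} (hva : ∀ x, v x ≤ a) :
    Real.log (A / ∑' x, |h x * m x|) ≤ a := by
  have hAH : A ≤ Real.exp a * ∑' x, |h x * m x| := hv.2 ▸ tsum_mul_exp_le hh hva
  have hH : 0 < ∑' x, |h x * m x| := pos_of_mul_pos_right (hA.trans_le hAH) (Real.exp_pos a).le
  rwa [Real.log_le_iff_le_exp (by positivity), div_le_iff₀ hH]

lemma exists_bound_of_kazdanWarnerFunctional_le [Nonempty X] (hcc : CanCompact b m)
    (hb : ∀ x y, 0 ≤ b x y) (hconn : GraphConnected b) (hm : FinMeasure m)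
    (hh : Summable fun x => h x * m x) (hA : 0 < A) (hκ : 0 < κ) (t : ℝ) :
    ∃ R E : ℝ, ∀ v ∈ kazdanWarnerSet b m h A, kazdanWarnerFunctional b m κ v ≤ t →
      (∀ x, |v x| ≤ R) ∧ energy b v ≤ E := by
  obtain ⟨C, hC₀, hC⟩ := hcc.exists_abs_sub_mean_le hb hconn hm
  set L := Real.log (A / ∑' x, |h x * m x|)
  set E := 4 * (t + (κ * C) ^ 2 - κ * L)
  refine ⟨|t / κ| + |L| + 2 * (C * √E), E, fun v hv hvt => ?_⟩
  have hE₀ := energy_nonneg hb v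
  have hosc (x : X) := abs_le.1 (hC v hv.1 x)
  have hmean_ge : L - C * √(energy b v) ≤ mean m v := by
    have := log_div_le_of_mem_kazdanWarnerSet hh hA hv fun x =>
      show v x ≤ mean m v + C * √(energy b v) by linarith [(hosc x).2]
    linarith
  have hE : energy b v ≤ E := by
    have := mul_le_mul_of_nonneg_left hmean_ge hκ.le
    unfold kazdanWarnerFunctional at hvt
    nlinarith [sq_nonneg (√(energy b v) - 2 * (κ * C)), Real.sq_sqrt hE₀]
  have hmean_le : mean m v ≤ t / κ := by
    unfold kazdanWarnerFunctional at hvt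
    rw [le_div_iff₀ hκ]
    linarith
  have hsqrt : C * √(energy b v) ≤ C * √E :=
    mul_le_mul_of_nonneg_left (Real.sqrt_le_sqrt hE) hC₀
  refine ⟨fun x => abs_le.2 ⟨?_, ?_⟩, hE⟩
  · linarith [(hosc x).1, neg_abs_le L, abs_nonneg (t / κ)]
  · have : 0 ≤ C * √(energy b v) := by positivity
    linarith [(hosc x).2, le_abs_self (t / κ), abs_nonneg L]

lemma isCompact_kazdanWarnerSet_inter (hb : ∀ x y, 0 ≤ b x y) (hm : FinMeasure m)
    (hh : Summable fun x => h x * m x) (R E : ℝ) :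
    IsCompact {v ∈ kazdanWarnerSet b m h A | (∀ x, |v x| ≤ R) ∧ energy b v ≤ E} := by
  have hcont : ContinuousOn (fun v : X → ℝ => ∑' x, h x * Real.exp (v x) * m x)
      {v | ∀ x, |v x| ≤ R} := by
    simpa only [mul_right_comm] using continuousOn_tsum_mul_comp Real.continuous_exp hh R
  have hbox := isCompact_setOf_forall_abs_le (X := X) R
  have hclosed := (hcont.preimage_isClosed_of_isClosed hbox.isClosed
    (isClosed_singleton (x := A))).inter (isClosed_setOf_energy_le hb E)
  have hsplit : {v ∈ kazdanWarnerSet b m h A | (∀ x, |v x| ≤ R) ∧ energy b v ≤ E} =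
      {v | ∀ x, |v x| ≤ R} ∩ (fun v => ∑' x, h x * Real.exp (v x) * m x) ⁻¹' {A} ∩
        {v | FinEnergy b v ∧ energy b v ≤ E} := by
    ext v
    exact ⟨fun ⟨⟨hv, hvA⟩, hR, hE⟩ => ⟨⟨hR, hvA⟩, hv.2, hE⟩,
      fun ⟨⟨hR, hvA⟩, hv, hE⟩ => ⟨⟨⟨.of_abs_le hm hR, hv⟩, hvA⟩, hR, hE⟩⟩
  rw [hsplit]
  exact hbox.of_isClosed_subset hclosed fun v hv => hv.1.1

lemma lowerSemicontinuousOn_kazdanWarnerFunctional (hb : ∀ x y, 0 ≤ b x y) (hm : Summable m)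
    (R : ℝ) :
    LowerSemicontinuousOn (kazdanWarnerFunctional b m κ)
      {v | FinEnergy b v ∧ ∀ x, |v x| ≤ R} := by
  have henergy : LowerSemicontinuousOn (fun v => 1 / 2 * energy b v) {v | FinEnergy b v} :=
    (continuous_const_mul (1 / 2 : ℝ)).comp_lowerSemicontinuousOn
      (lowerSemicontinuousOn_energy hb) (monotone_mul_left_of_nonneg (by norm_num))
  have hmean : ContinuousOn (fun v => κ * mean m v) {v | ∀ x, |v x| ≤ R} :=
    (continuousOn_mean hm R).const_smul κ
  exact (henergy.mono fun v hv => hv.1).add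
    (hmean.mono fun v hv => hv.2).lowerSemicontinuousOn

theorem stmt19_general (hb : IsGraph b) (hconn : GraphConnected b) (hm : FinMeasure m)
    (hcc : CanCompact b m) (hh : Summable fun x => h x * m x) (hpos : ∃ x₀, 0 < h x₀)
    (hA : 0 < A) (hκ : 0 < κ) :
    ∃ u ∈ kazdanWarnerSet b m h A,
      IsMinOn (kazdanWarnerFunctional b m κ) (kazdanWarnerSet b m h A) u := by
  have : Nonempty X := hpos.nonempty
  obtain ⟨v₀, hv₀⟩ := kazdanWarnerSet_nonempty hb hm hh hpos hA
  obtain ⟨R, E, hRE⟩ := exists_bound_of_kazdanWarnerFunctional_le hcc hb.nonneg hconn hm hh hA hκ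
    (kazdanWarnerFunctional b m κ v₀)
  let K := {v ∈ kazdanWarnerSet b m h A | (∀ x, |v x| ≤ R) ∧ energy b v ≤ E}
  have hv₀K : v₀ ∈ K := ⟨hv₀, hRE v₀ hv₀ le_rfl⟩
  have hlsc : LowerSemicontinuousOn (kazdanWarnerFunctional b m κ) K :=
    (lowerSemicontinuousOn_kazdanWarnerFunctional hb.nonneg hm.summable R).mono
      fun v hv => ⟨hv.1.1.2, hv.2.1⟩
  obtain ⟨u, hu, hmin⟩ := hlsc.exists_isMinOn ⟨v₀, hv₀K⟩
    (isCompact_kazdanWarnerSet_inter hb.nonneg hm hh R E)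
  refine ⟨u, hu.1, isMinOn_iff.2 fun v hv => ?_⟩
  rcases le_total (kazdanWarnerFunctional b m κ v) (kazdanWarnerFunctional b m κ v₀) with hle | hge
  · exact isMinOn_iff.1 hmin v ⟨hv, hRE v hv hle⟩
  · exact (isMinOn_iff.1 hmin v₀ hv₀K).trans hge

end KazdanWarner

/-- the set `B = {v ∈ D(Q) : ⟨h e^v, 1⟩ = c m(X)}` is nonempty and
`J(v) = (1/2)Q(v) + c m(X) v̄` attains its infimum on `B`. -/
theorem stmt19 {X : Type*} [Countable X] (b : X → X → ℝ) (m : X → ℝ)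
    (hb : IsGraph b) (hconn : GraphConnected b) (hm : FinMeasure m)
    (hcc : CanCompact b m) (c : ℝ) (hc : 0 < c)
    (h : X → ℝ) (hh2 : MemL2 m h) (hpos : ∃ x₀, 0 < h x₀) :
    (∃ v : X → ℝ, MemDQ b m v ∧
      (∑' x, h x * Real.exp (v x) * m x) = c * (∑' x, m x)) ∧
    (∃ u : X → ℝ,
      (MemDQ b m u ∧ (∑' x, h x * Real.exp (u x) * m x) = c * (∑' x, m x)) ∧
      ∀ v : X → ℝ, MemDQ b m v →
        (∑' x, h x * Real.exp (v x) * m x) = c * (∑' x, m x) →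
        (1 / 2) * energy b u + c * (∑' x, m x) * mean m u ≤
          (1 / 2) * energy b v + c * (∑' x, m x) * mean m v) := by
  have : Nonempty X := hpos.nonempty
  have hA : 0 < c * ∑' x, m x := mul_pos hc hm.tsum_pos
  obtain ⟨u, hu, hmin⟩ := stmt19_general hb hconn hm hcc (hh2.summable_mul hm) hpos hA hA
  exact ⟨⟨u, hu⟩, u, hu, fun v hv hvB => isMinOn_iff.1 hmin v ⟨hv, hvB⟩⟩
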